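/- For any two bilinear forms A and B on an n-dimensional real inner product space (V,g) and any 1 ≤ k ≤ n, s_k(A+B) = Σ_{i=0}^k (1/(k−i)!)·⟨s_{(k−i,i)}(A), B^{k−i}⟩. -/

import Mathlib

noncomputable section

open Finset

/-- Double forms over an `n`-dimensional real inner product space, described by their
coefficients in a fixed orthonormal basis: a `(p,q)`-double form corresponds to a function
supported on pairs of subsets of cardinalities `p` and `q`. -/
abbrev DForm (n : ℕ) := Finset (Fin n) → Finset (Fin n) → ℝ

namespace DForm

variable {n : ℕ}

/-- Sign of the shuffle placing the elements of `A` (in increasing order) before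
those of `B` (in increasing order). -/
def shuffleSign (A B : Finset (Fin n)) : ℝ :=
  (-1 : ℝ) ^ (∑ x ∈ B, (A.filter fun a => x < a).card)

/-- The exterior product of double forms. -/
def wedge (ω₁ ω₂ : DForm n) : DForm n := fun I J =>
  ∑ A ∈ I.powerset, ∑ B ∈ J.powerset,
    shuffleSign A (I \ A) * shuffleSign B (J \ B) * ω₁ A B * ω₂ (I \ A) (J \ B)

/-- Exterior powers `ω^k` of a double form. -/
def dpow (ω : DForm n) : ℕ → DForm n
  | 0 => fun I J => if I = ∅ ∧ J = ∅ then 1 else 0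
  | k + 1 => wedge ω (dpow ω k)

/-- The double Hodge star operator. -/
def hstar (ω : DForm n) : DForm n := fun I J =>
  shuffleSign Iᶜ I * shuffleSign Jᶜ J * ω Iᶜ Jᶜ

/-- The contraction `c` of double forms. -/
def contr (ω : DForm n) : DForm n := fun I J =>
  ∑ j : Fin n,
    if j ∈ I ∨ j ∈ J then 0
    else shuffleSign {j} I * shuffleSign {j} J * ω (insert j I) (insert j J)

/-- Iterated contraction `c^k`. -/
def citer (ω : DForm n) : ℕ → DForm n
  | 0 => ω
  | k + 1 => contr (citer ω k)

/-- The inner product of double forms. -/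
def dinner (ω₁ ω₂ : DForm n) : ℝ :=
  ∑ I : Finset (Fin n), ∑ J : Finset (Fin n), ω₁ I J * ω₂ I J

/-- The transpose `ω^t` of a double form. -/
def transp (ω : DForm n) : DForm n := fun I J => ω J I

/-- The composition (Greub) product `ω₁ ∘ ω₂` of double forms. -/
def comp (ω₁ ω₂ : DForm n) : DForm n := fun I J =>
  ∑ K : Finset (Fin n), ω₂ I K * ω₁ K J

/-- The scalar value of a `(0,0)`-double form. -/
def toScalar (ω : DForm n) : ℝ := ω ∅ ∅

/-- The metric, as a `(1,1)`-double form. -/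
def gMetric (n : ℕ) : DForm n := fun I J => if I = J ∧ I.card = 1 then 1 else 0

/-- Iterated composition power `ω^{∘r}` of a `(1,1)`-double form, with `ω^{∘0} = g`. -/
def cpow (ω : DForm n) : ℕ → DForm n
  | 0 => gMetric n
  | r + 1 => comp ω (cpow ω r)

/-- The `(1,1)`-double form associated to a bilinear form, given by its matrix in the
orthonormal basis. -/
def ofMatrix (h : Matrix (Fin n) (Fin n) ℝ) : DForm n := fun I J =>
  ∑ i : Fin n, ∑ j : Fin n, if I = {i} ∧ J = {j} then h i j else 0

/-- `ω` is a `(p,q)`-double form. -/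
def IsOfDeg (ω : DForm n) (p q : ℕ) : Prop :=
  ∀ I J : Finset (Fin n), ω I J ≠ 0 → I.card = p ∧ J.card = q

/-- `ω` is a symmetric double form. -/
def IsSym (ω : DForm n) : Prop := ∀ I J, ω I J = ω J I

/-- The sign relating `e_{v 0} ∧ ⋯ ∧ e_{v (p-1)}` to the corresponding increasing
basis `p`-vector (and `0` if the indices are not pairwise distinct). -/
def tupleSign {p : ℕ} (v : Fin p → Fin n) : ℝ :=
  if Function.Injective v then (((Equiv.Perm.sign (Tuple.sort v)) : ℤ) : ℝ) else 0

/-- Evaluation of a double form on wedges of basis vectors indexed by arbitrary tuples. -/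
def evalT (ω : DForm n) {p q : ℕ} (v : Fin p → Fin n) (w : Fin q → Fin n) : ℝ :=
  tupleSign v * tupleSign w * ω (Finset.image v Finset.univ) (Finset.image w Finset.univ)

/-- The first Bianchi identity for a `(2,2)`-double form:
`R(x∧y,z∧t) + R(y∧z,x∧t) + R(z∧x,y∧t) = 0`. -/
def Bianchi2 (R : DForm n) : Prop :=
  ∀ x y z t : Fin n,
    evalT R ![x, y] ![z, t] + evalT R ![y, z] ![x, t] + evalT R ![z, x] ![y, t] = 0

/-- The first Bianchi identity for a `(p,p)`-double form. -/
def FirstBianchi (ω : DForm n) (p : ℕ) : Prop :=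
  ∀ (x : Fin (p + 1) → Fin n) (y : Fin (p - 1) → Fin n),
    ∑ j : Fin (p + 1),
      (-1 : ℝ) ^ (j : ℕ) * evalT ω (x ∘ Fin.succAbove j) (Fin.cons (x j) y) = 0

/-- The characteristic coefficient `s_k(h)` of a bilinear form `h`, defined through the
characteristic polynomial: `det(h - λ g) = ∑ (-1)^(n-i) s_i(h) λ^(n-i)`. -/
def sInv (h : Matrix (Fin n) (Fin n) ℝ) (k : ℕ) : ℝ :=
  (-1 : ℝ) ^ k * (Matrix.charpoly h).coeff (n - k)

/-- The `k`-th cofactor (Newton) transformation `t_k(h) = (1/(k!(n-1-k)!)) *(g^{n-1-k} h^k)`. -/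
def tInv (h : Matrix (Fin n) (Fin n) ℝ) (k : ℕ) : DForm n :=
  ((k.factorial * (n - 1 - k).factorial : ℕ) : ℝ)⁻¹ •
    hstar (wedge (dpow (gMetric n) (n - 1 - k)) (dpow (ofMatrix h) k))

/-- The `(r,q)`-cofactor `s_{(r,q)}(h) = (1/(q!(n-q-r)!)) *(g^{n-q-r} h^q)`. -/
def sCof (h : Matrix (Fin n) (Fin n) ℝ) (r q : ℕ) : DForm n :=
  ((q.factorial * (n - q - r).factorial : ℕ) : ℝ)⁻¹ •
    hstar (wedge (dpow (gMetric n) (n - q - r)) (dpow (ofMatrix h) q))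

end DForm

/-!
Double forms are exterior forms whose coefficients are again exterior forms. They make up an
associative algebra in which forms of bidegree `(1,1)` commute, and the coefficient of `h ^ n` on
the pair of volume forms is `n! det h`. Expanding `(t g - h) ^ n` by the binomial theorem
identifies `s_k(h)` with the top coefficient of `g ^ (n - k) h ^ k / ((n - k)! k!)`. Since
`⟨*ω₁, ω₂⟩` is the top coefficient of `ω₁ ω₂`, the claim is the binomial expansion of
`(A + B) ^ k / k!` inside `g ^ (n - k) (A + B) ^ k / ((n - k)! k!)`.
-/

theorem sum_powerset_powerset {α M : Type*} [DecidableEq α] [AddCommMonoid M] (I : Finset α)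
    (f : Finset α → Finset α → Finset α → M) :
    ∑ C ∈ I.powerset, ∑ A ∈ C.powerset, f A (C \ A) (I \ C) =
      ∑ A ∈ I.powerset, ∑ B ∈ (I \ A).powerset, f A B ((I \ A) \ B) := by
  rw [sum_sigma', sum_sigma']
  refine sum_bij' (fun p _ => ⟨p.2, p.1 \ p.2⟩) (fun p _ => ⟨p.1 ∪ p.2, p.1⟩) ?_ ?_ ?_ ?_ ?_ <;>
    rintro ⟨C, A⟩ h <;> simp only [mem_sigma, mem_powerset] at h ⊢
  · exact ⟨h.2.trans h.1, sdiff_subset_sdiff h.1 le_rfl⟩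
  · exact ⟨union_subset h.1 (h.2.trans sdiff_subset), subset_union_left⟩
  · rw [union_sdiff_of_subset h.2]
  · rw [union_sdiff_cancel_left (disjoint_sdiff.mono_right h.2)]
  · rw [sdiff_sdiff_left, sup_eq_union, union_sdiff_of_subset h.2]

theorem image_univ_sdiff_singleton {α : Type*} [DecidableEq α] {k : ℕ} {u : Fin (k + 1) → α}
    (hu : Function.Injective u) (i : Fin (k + 1)) :
    univ.image u \ {u i} = univ.image (u ∘ i.succAbove) := by
  rw [← image_image, Fin.image_succAbove_univ, ← image_singleton, ← image_sdiff _ _ hu,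
    compl_eq_univ_sdiff]

theorem inv_factorial_smul_add_pow_of_commute {S : Type*} [Ring S] [Algebra ℝ S] {x y : S}
    (h : Commute x y) (k : ℕ) :
    (k.factorial : ℝ)⁻¹ • (x + y) ^ k = ∑ i ∈ range (k + 1),
      ((i.factorial : ℝ)⁻¹ * ((k - i).factorial : ℝ)⁻¹) • (x ^ i * y ^ (k - i)) := by
  rw [h.add_pow, smul_sum]
  refine sum_congr rfl fun i hi => ?_
  rw [← nsmul_eq_mul', ← Nat.cast_smul_eq_nsmul ℝ, smul_smul,
    Nat.cast_choose ℝ (Nat.le_of_lt_succ (mem_range.1 hi))]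
  congr 1
  field_simp

namespace DForm

variable {n : ℕ}

theorem shuffleSign_empty_left (A : Finset (Fin n)) : shuffleSign ∅ A = 1 := by
  simp [shuffleSign]

theorem shuffleSign_empty_right (A : Finset (Fin n)) : shuffleSign A ∅ = 1 := by
  simp [shuffleSign]

theorem shuffleSign_union_left {A B : Finset (Fin n)} (h : Disjoint A B) (C : Finset (Fin n)) :
    shuffleSign (A ∪ B) C = shuffleSign A C * shuffleSign B C := by
  simp only [shuffleSign, ← pow_add, ← sum_add_distrib, filter_union,
    card_union_of_disjoint (disjoint_filter_filter h)]

theorem shuffleSign_union_right (A : Finset (Fin n)) {B C : Finset (Fin n)} (h : Disjoint B C) :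
    shuffleSign A (B ∪ C) = shuffleSign A B * shuffleSign A C := by
  rw [shuffleSign, sum_union h, pow_add, shuffleSign, shuffleSign]

theorem shuffleSign_singleton_swap {i j : Fin n} (h : i ≠ j) :
    shuffleSign {i} {j} = -shuffleSign {j} {i} := by
  rcases h.lt_or_gt with h | h <;> simp [shuffleSign, filter_singleton, h, h.not_gt]

theorem shuffleSign_singleton_left (i : Fin n) (A : Finset (Fin n)) :
    shuffleSign {i} A = (-1) ^ #{x ∈ A | x < i} := by
  simp only [shuffleSign, filter_singleton, apply_ite card, card_singleton, card_empty, card_filter]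

theorem shuffleSign_apply_image_succAbove {k : ℕ} {u : Fin (k + 1) → Fin n} (hu : StrictMono u)
    (i : Fin (k + 1)) :
    shuffleSign {u i} (univ.image (u ∘ i.succAbove)) = (-1) ^ (i : ℕ) := by
  have filter_eq : {x ∈ univ.image (u ∘ i.succAbove) | x < u i} = (Iio i).image u := by
    rw [← image_univ_sdiff_singleton hu.injective]
    ext x
    simp only [mem_filter, mem_sdiff, mem_image, mem_univ, true_and, mem_singleton, mem_Iio]
    constructor
    · rintro ⟨⟨⟨a, rfl⟩, _⟩, h⟩
      exact ⟨a, hu.lt_iff_lt.1 h, rfl⟩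
    · rintro ⟨a, h, rfl⟩
      exact ⟨⟨⟨a, rfl⟩, (hu h).ne⟩, hu h⟩
  rw [shuffleSign_singleton_left, filter_eq, card_image_of_injective _ hu.injective, Fin.card_Iio]

end DForm

/-- Exterior forms in `n` variables with coefficients in `R`, encoded by their coefficients on
the increasing multi-indices. Double forms are the case where `R` is itself `ExtForm n ℝ`. -/
def ExtForm (n : ℕ) (R : Type*) := Finset (Fin n) → R

namespace ExtForm

open DForm

section Module

variable {m n : ℕ} {R : Type*} [AddCommGroup R] [Module ℝ R]

instance : AddCommGroup (ExtForm n R) := inferInstanceAs (AddCommGroup (Finset (Fin n) → R))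

instance : Module ℝ (ExtForm n R) := inferInstanceAs (Module ℝ (Finset (Fin n) → R))

/-- The coefficient of an exterior form on the increasing multi-index `I`. -/
def coeff (I : Finset (Fin n)) : ExtForm n R →ₗ[ℝ] R := LinearMap.proj (φ := fun _ => R) I

/-- The exterior form `x e_I`. -/
def single (I : Finset (Fin n)) : R →ₗ[ℝ] ExtForm n R := LinearMap.single ℝ (fun _ => R) I

@[ext]
theorem ext {f g : ExtForm n R} (h : ∀ I, coeff I f = coeff I g) : f = g := funext h

theorem coeff_single (I A : Finset (Fin n)) (x : R) :
    coeff I (single A x) = if I = A then x else 0 :=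
  Pi.single_apply A x I

/-- The exterior form of degree one `∑ i, x i e_i`. -/
def oneForm : (Fin n → R) →ₗ[ℝ] ExtForm n R := ∑ i, single {i} ∘ₗ LinearMap.proj i

theorem oneForm_apply (x : Fin n → R) : oneForm x = ∑ i, single {i} (x i) := by
  simp [oneForm]

/-- The double form of bidegree `(1,1)` with matrix `h`, that is `∑ i j, h i j (e_i ⊗ e_j)`. -/
def matrixForm : Matrix (Fin m) (Fin n) R →ₗ[ℝ] ExtForm m (ExtForm n R) :=
  oneForm ∘ₗ oneForm.compLeft (Fin m)

theorem matrixForm_apply (h : Matrix (Fin m) (Fin n) R) :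
    matrixForm h = oneForm fun i => oneForm (h i) :=
  rfl

/-- The coefficient of a double form on the pair of volume forms. -/
def topCoeff : ExtForm m (ExtForm n R) →ₗ[ℝ] R := coeff univ ∘ₗ coeff univ

end Module

section Ring

variable {n : ℕ} {R : Type*} [Ring R] [Algebra ℝ R]

instance : Mul (ExtForm n R) where
  mul f g := fun I => ∑ A ∈ I.powerset, shuffleSign A (I \ A) • (coeff A f * coeff (I \ A) g)

theorem coeff_mul (I : Finset (Fin n)) (f g : ExtForm n R) :
    coeff I (f * g) =
      ∑ A ∈ I.powerset, shuffleSign A (I \ A) • (coeff A f * coeff (I \ A) g) :=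
  rfl

instance : One (ExtForm n R) where
  one := single ∅ 1

theorem one_def : (1 : ExtForm n R) = single ∅ 1 := rfl

theorem coeff_single_mul (I A : Finset (Fin n)) (x : R) (f : ExtForm n R) :
    coeff I (single A x * f) =
      if A ⊆ I then shuffleSign A (I \ A) • (x * coeff (I \ A) f) else 0 := by
  simp [coeff_mul, coeff_single]

protected theorem one_mul (f : ExtForm n R) : 1 * f = f := by
  ext I
  simp [one_def, coeff_single_mul, shuffleSign_empty_left]

protected theorem mul_one (f : ExtForm n R) : f * 1 = f := by
  ext I
  rw [coeff_mul, sum_eq_single_of_mem I (mem_powerset_self I)]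
  · simp [one_def, coeff_single, shuffleSign_empty_right]
  · intro A hA hne
    have sdiff_ne : I \ A ≠ ∅ := fun h =>
      hne ((mem_powerset.1 hA).antisymm (sdiff_eq_empty_iff_subset.1 h))
    simp [one_def, coeff_single, sdiff_ne]

protected theorem mul_assoc (f g h : ExtForm n R) : f * g * h = f * (g * h) := by
  ext I
  let term (A B C : Finset (Fin n)) : R :=
    (shuffleSign A B * shuffleSign A C * shuffleSign B C) • (coeff A f * coeff B g * coeff C h)
  calc
    coeff I (f * g * h) = ∑ C ∈ I.powerset, ∑ A ∈ C.powerset, term A (C \ A) (I \ C) := by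
      simp only [coeff_mul, sum_mul, smul_sum]
      refine sum_congr rfl fun C _ => sum_congr rfl fun A hA => ?_
      have sign_eq := shuffleSign_union_left (disjoint_sdiff (s := A) (t := C)) (I \ C)
      rw [union_sdiff_of_subset (mem_powerset.1 hA)] at sign_eq
      rw [sign_eq, smul_mul_assoc, smul_smul]
      congr 1
      ring
    _ = ∑ A ∈ I.powerset, ∑ B ∈ (I \ A).powerset, term A B ((I \ A) \ B) :=
      sum_powerset_powerset I term
    _ = coeff I (f * (g * h)) := by
      simp only [coeff_mul, mul_sum, smul_sum]
      refine sum_congr rfl fun A _ => sum_congr rfl fun B hB => ?_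
      have sign_eq := shuffleSign_union_right A (disjoint_sdiff (s := B) (t := I \ A))
      rw [union_sdiff_of_subset (mem_powerset.1 hB)] at sign_eq
      rw [sign_eq, mul_smul_comm, smul_smul, ← mul_assoc]

instance : Ring (ExtForm n R) where
  __ := (inferInstance : AddCommGroup (ExtForm n R))
  mul_assoc := ExtForm.mul_assoc
  one_mul := ExtForm.one_mul
  mul_one := ExtForm.mul_one
  left_distrib f g h := by ext I; simp [coeff_mul, mul_add, sum_add_distrib]
  right_distrib f g h := by ext I; simp [coeff_mul, add_mul, sum_add_distrib]
  zero_mul f := by ext I; simp [coeff_mul]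
  mul_zero f := by ext I; simp [coeff_mul]

instance : Algebra ℝ (ExtForm n R) :=
  Algebra.ofModule
    (fun t f g => by ext I; simp [coeff_mul, smul_sum, smul_comm t])
    (fun t f g => by ext I; simp [coeff_mul, smul_sum, smul_comm t])

theorem single_mul_single (A B : Finset (Fin n)) (x y : R) :
    single A x * single B y =
      if Disjoint A B then shuffleSign A B • single (A ∪ B) (x * y) else 0 := by
  ext I
  rw [coeff_single_mul, coeff_single]
  by_cases hI : A ⊆ I ∧ I \ A = B
  · obtain ⟨hA, rfl⟩ := hI
    simp [hA, disjoint_sdiff, coeff_single]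
  · have ne_union : Disjoint A B → I ≠ A ∪ B := by
      rintro h rfl
      exact hI ⟨subset_union_left, union_sdiff_cancel_left h⟩
    split_ifs <;> simp_all [coeff_single]

theorem single_singleton_mul_swap {ε : ℝ} {x y : R} (h : x * y = ε • (y * x)) (i j : Fin n) :
    single {i} x * single {j} y = -ε • (single {j} y * single {i} x) := by
  rcases eq_or_ne i j with rfl | hij
  · simp [single_mul_single]
  · simp [single_mul_single, hij, hij.symm, shuffleSign_singleton_swap hij, h, union_comm {i},
      smul_comm ε]

theorem oneForm_mul_swap {ε : ℝ} {x y : Fin n → R} (h : ∀ i j, x i * y j = ε • (y j * x i)) :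
    oneForm x * oneForm y = -ε • (oneForm y * oneForm x) := by
  simp only [oneForm_apply, sum_mul_sum, smul_sum]
  rw [sum_comm]
  exact sum_congr rfl fun j _ => sum_congr rfl fun i _ => single_singleton_mul_swap (h i j) i j

theorem coeff_image_oneForm_mul {k : ℕ} {u : Fin (k + 1) → Fin n} (hu : StrictMono u)
    (x : Fin n → R) (f : ExtForm n R) :
    coeff (univ.image u) (oneForm x * f) =
      ∑ i : Fin (k + 1), (-1 : ℝ) ^ (i : ℕ) •
        (x (u i) * coeff (univ.image (u ∘ i.succAbove)) f) := by
  simp only [oneForm_apply, sum_mul, map_sum, coeff_single_mul, singleton_subset_iff]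
  rw [← sum_filter, filter_univ_mem, sum_image hu.injective.injOn]
  refine sum_congr rfl fun i _ => ?_
  rw [image_univ_sdiff_singleton hu.injective, shuffleSign_apply_image_succAbove hu]

end Ring

section Matrix

variable {m n : ℕ} {R : Type*} [CommRing R] [Algebra ℝ R]

/-- Forms of degree one anticommute; the two signs, one per tensor factor, cancel. -/
theorem commute_matrixForm (A B : Matrix (Fin m) (Fin n) R) :
    Commute (matrixForm A) (matrixForm B) := by
  have anticomm (i j : Fin m) :
      oneForm (A i) * oneForm (B j) = (-1 : ℝ) • (oneForm (B j) * oneForm (A i)) :=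
    oneForm_mul_swap fun _ _ => by rw [one_smul, mul_comm]
  have comm := oneForm_mul_swap anticomm
  rwa [neg_neg, one_smul] at comm

theorem coeff_image_matrixForm_pow (h : Matrix (Fin m) (Fin n) R) {k : ℕ} {u : Fin k → Fin m}
    {v : Fin k → Fin n} (hu : StrictMono u) (hv : StrictMono v) :
    coeff (univ.image v) (coeff (univ.image u) (matrixForm h ^ k)) =
      (k.factorial : ℝ) • (h.submatrix u v).det := by
  induction k with
  | zero => simp [one_def, coeff_single]
  | succ k ih =>
    -- The Laplace expansions along the `k + 1` rows all contribute the same value.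
    have row_expansion (i : Fin (k + 1)) :
        (-1 : ℝ) ^ (i : ℕ) • coeff (univ.image v) (oneForm (h (u i)) *
          coeff (univ.image (u ∘ i.succAbove)) (matrixForm h ^ k)) =
        (k.factorial : ℝ) • (h.submatrix u v).det := by
      rw [coeff_image_oneForm_mul hv, Matrix.det_succ_row _ i, smul_sum, smul_sum]
      refine sum_congr rfl fun j _ => ?_
      rw [ih (hu.comp i.strictMono_succAbove) (hv.comp j.strictMono_succAbove),
        Matrix.submatrix_submatrix, Matrix.submatrix_apply]
      simp only [Algebra.smul_def, map_pow, map_neg, map_one, map_natCast]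
      ring
    rw [pow_succ', matrixForm_apply, coeff_image_oneForm_mul hu, ← matrixForm_apply]
    simp only [map_sum, map_smul, row_expansion]
    rw [sum_const, card_univ, Fintype.card_fin, ← Nat.cast_smul_eq_nsmul ℝ, smul_smul,
      Nat.factorial_succ, Nat.cast_mul]

theorem topCoeff_matrixForm_pow (h : Matrix (Fin n) (Fin n) R) :
    topCoeff (matrixForm h ^ n) = (n.factorial : ℝ) • h.det := by
  simpa [topCoeff] using coeff_image_matrixForm_pow h strictMono_id strictMono_id

theorem det_add_eq_sum (A B : Matrix (Fin n) (Fin n) R) :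
    (A + B).det = ∑ i ∈ range (n + 1), ((i.factorial : ℝ)⁻¹ * ((n - i).factorial : ℝ)⁻¹) •
      topCoeff (matrixForm A ^ i * matrixForm B ^ (n - i)) := by
  have binomial := inv_factorial_smul_add_pow_of_commute (commute_matrixForm A B) n
  simp only [← map_smul, ← map_sum, ← binomial, ← map_add]
  rw [map_smul, topCoeff_matrixForm_pow,
    inv_smul_smul₀ (Nat.cast_ne_zero.2 n.factorial_ne_zero)]

end Matrix

end ExtForm

namespace DForm

open ExtForm

variable {n : ℕ}

/-- A double form read as an exterior form with exterior forms as coefficients. -/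
def toExtForm : DForm n →ₗ[ℝ] ExtForm n (ExtForm n ℝ) where
  toFun ω := ω
  map_add' _ _ := rfl
  map_smul' _ _ := rfl

theorem coeff_coeff_toExtForm (ω : DForm n) (I J : Finset (Fin n)) :
    coeff J (coeff I (toExtForm ω)) = ω I J :=
  rfl

theorem toExtForm_wedge (ω₁ ω₂ : DForm n) :
    toExtForm (wedge ω₁ ω₂) = toExtForm ω₁ * toExtForm ω₂ := by
  ext I J
  simp only [coeff_coeff_toExtForm, coeff_mul, map_sum, map_smul, mul_sum, wedge, smul_eq_mul,
    mul_assoc]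

theorem toExtForm_dpow (ω : DForm n) (k : ℕ) : toExtForm (dpow ω k) = toExtForm ω ^ k := by
  induction k with
  | zero =>
    ext I J
    rw [coeff_coeff_toExtForm, pow_zero, one_def, coeff_single]
    by_cases hI : I = ∅ <;> simp [dpow, hI, one_def, coeff_single]
  | succ k ih => rw [dpow, toExtForm_wedge, ih, pow_succ']

theorem toExtForm_ofMatrix (h : Matrix (Fin n) (Fin n) ℝ) :
    toExtForm (ofMatrix h) = matrixForm h := by
  ext I J
  simp only [coeff_coeff_toExtForm, ofMatrix, matrixForm_apply, oneForm_apply, map_sum,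
    coeff_single, apply_ite (coeff J), map_zero, ite_and]

theorem gMetric_eq_ofMatrix_one : gMetric n = ofMatrix 1 := by
  ext I J
  simp only [gMetric, ofMatrix, Matrix.one_apply, ← ite_and, and_assoc, card_eq_one]
  by_cases hI : ∃ i, I = {i}
  · obtain ⟨i, rfl⟩ := hI
    rw [sum_eq_single_of_mem i (mem_univ i) (by simp +contextual [eq_comm]),
      sum_eq_single_of_mem i (mem_univ i) (by simp +contextual [eq_comm])]
    simp [eq_comm]
  · simp [not_exists.1 hI]

theorem toExtForm_gMetric : toExtForm (gMetric n) = matrixForm 1 := by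
  rw [gMetric_eq_ofMatrix_one, toExtForm_ofMatrix]

theorem charpoly_eq_sum (h : Matrix (Fin n) (Fin n) ℝ) :
    h.charpoly = ∑ i ∈ range (n + 1), Polynomial.monomial i
      ((-1) ^ (n - i) * ((i.factorial : ℝ)⁻¹ * ((n - i).factorial : ℝ)⁻¹ *
        topCoeff (toExtForm (gMetric n) ^ i * matrixForm h ^ (n - i)))) := by
  refine Polynomial.funext fun t => ?_
  have scalar_sub : Matrix.scalar (Fin n) t - h = t • 1 + (-1 : ℝ) • h := by
    rw [Matrix.scalar_apply, Matrix.smul_one_eq_diagonal, neg_one_smul, sub_eq_add_neg]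
  rw [Matrix.eval_charpoly, scalar_sub, det_add_eq_sum, Polynomial.eval_finsetSum]
  refine sum_congr rfl fun i _ => ?_
  rw [map_smul, map_smul, smul_pow, smul_pow, smul_mul_smul_comm, map_smul,
    Polynomial.eval_monomial, toExtForm_gMetric, smul_eq_mul, smul_eq_mul]
  ring

theorem sInv_eq_topCoeff (h : Matrix (Fin n) (Fin n) ℝ) {k : ℕ} (hk : k ≤ n) :
    sInv h k = ((n - k).factorial : ℝ)⁻¹ *
      topCoeff (toExtForm (gMetric n) ^ (n - k) * ((k.factorial : ℝ)⁻¹ • matrixForm h ^ k)) := by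
  have sign_mul_self : (-1 : ℝ) ^ k * (-1) ^ k = 1 := by rw [← mul_pow]; norm_num
  rw [sInv, charpoly_eq_sum, Polynomial.finsetSum_coeff,
    sum_eq_single_of_mem (n - k) (mem_range.2 (by omega))
      fun i _ hi => Polynomial.coeff_monomial_of_ne _ hi.symm,
    Polynomial.coeff_monomial_same, Nat.sub_sub_self hk, ← mul_assoc, sign_mul_self, one_mul,
    mul_smul_comm, map_smul, smul_eq_mul, mul_assoc]

theorem dinner_smul_left (t : ℝ) (ω₁ ω₂ : DForm n) :
    dinner (t • ω₁) ω₂ = t * dinner ω₁ ω₂ := by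
  simp only [dinner, Pi.smul_apply, smul_eq_mul, mul_sum, mul_assoc]

theorem dinner_hstar (ω₁ ω₂ : DForm n) :
    dinner (hstar ω₁) ω₂ = topCoeff (toExtForm ω₁ * toExtForm ω₂) := by
  rw [← toExtForm_wedge, topCoeff, LinearMap.comp_apply, coeff_coeff_toExtForm, wedge, dinner,
    powerset_univ]
  refine Fintype.sum_equiv (compl_involutive.toPerm _) _ _ fun I => ?_
  refine Fintype.sum_equiv (compl_involutive.toPerm _) _ _ fun J => ?_
  simp [hstar]

theorem dinner_sCof (h : Matrix (Fin n) (Fin n) ℝ) (r q : ℕ) (ω : DForm n) :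
    dinner (sCof h r q) ω = ((q.factorial : ℝ)⁻¹ * ((n - q - r).factorial : ℝ)⁻¹) *
      topCoeff (toExtForm (gMetric n) ^ (n - q - r) * matrixForm h ^ q * toExtForm ω) := by
  rw [sCof, dinner_smul_left, dinner_hstar, toExtForm_wedge, toExtForm_dpow, toExtForm_dpow,
    toExtForm_ofMatrix, Nat.cast_mul, mul_inv]

end DForm

open DForm in
/-- `s_k` of a sum: `s_k(A+B) = ∑_{i=0}^k (1/(k-i)!) ⟨s_{(k-i,i)}(A), B^{k-i}⟩`. -/
theorem statement9 (n : ℕ) (A B : Matrix (Fin n) (Fin n) ℝ) (k : ℕ)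
    (hk1 : 1 ≤ k) (hk2 : k ≤ n) :
    sInv (A + B) k =
      ∑ i ∈ Finset.range (k + 1),
        (((k - i).factorial : ℕ) : ℝ)⁻¹ *
          dinner (sCof A (k - i) i) (dpow (ofMatrix B) (k - i)) := by
  have binomial := inv_factorial_smul_add_pow_of_commute (ExtForm.commute_matrixForm A B) k
  rw [sInv_eq_topCoeff _ hk2, map_add, binomial, mul_sum, map_sum, mul_sum]
  refine sum_congr rfl fun i hi => ?_
  have hik : n - i - (k - i) = n - k := by have := mem_range.1 hi; omega
  rw [dinner_sCof, hik, toExtForm_dpow, toExtForm_ofMatrix, mul_smul_comm, map_smul, smul_eq_mul,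
    mul_assoc (_ ^ (n - k))]
  ring
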